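/- arXiv:1610.01377 — 3 statements merged into one kernel-verified Lean document; each statement's English description precedes it below -/
import Mathlib

section
/- Let 3 ≤ r < s be integers, 1 ≤ d < r, and let M be an indecomposable representation of Γ_r that is not simple. If Hom(M, X_U) = 0 for all U ∈ Gr_{d,r}, then Hom(inf(M), X_V) = 0 for all V ∈ Gr_{d+s−r, s}, where X_V denotes the corresponding representation of Γ_s. -/
open Module LinearMap

universe u

/-- A finite-dimensional representation of the `r`-Kronecker quiver `Γ_r` over `k`:
two finite-dimensional `k`-vector spaces `M₁`, `M₂` and `r` linear maps `M₁ → M₂`. -/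
structure KRep (k : Type u) [Field k] (r : ℕ) : Type (u + 1) where
  V1 : Type u
  V2 : Type u
  [addV1 : AddCommGroup V1]
  [addV2 : AddCommGroup V2]
  [modV1 : Module k V1]
  [modV2 : Module k V2]
  [finV1 : FiniteDimensional k V1]
  [finV2 : FiniteDimensional k V2]
  f : Fin r → V1 →ₗ[k] V2

attribute [instance] KRep.addV1 KRep.addV2 KRep.modV1 KRep.modV2 KRep.finV1 KRep.finV2

variable {k : Type u} [Field k] {r : ℕ}

/-- For `α ∈ k^r`, the operator `x^M_α = ∑ i, αᵢ • M(γᵢ) : M₁ → M₂`. -/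
def KRep.x (M : KRep k r) (α : Fin r → k) : M.V1 →ₗ[k] M.V2 :=
  ∑ i, α i • M.f i

/-- The space `Hom(M, N)` of morphisms of representations, as a `k`-submodule of the
pairs of linear maps `(f₁ : M₁ → N₁, f₂ : M₂ → N₂)`; membership is the condition
`f₂ ∘ M(γᵢ) = N(γᵢ) ∘ f₁` for all `i`. -/
def KHom (M N : KRep k r) : Submodule k ((M.V1 →ₗ[k] N.V1) × (M.V2 →ₗ[k] N.V2)) where
  carrier := {p | ∀ i, p.2 ∘ₗ M.f i = N.f i ∘ₗ p.1}
  add_mem' := by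
    intro a b ha hb i
    simp only [Prod.snd_add, Prod.fst_add, LinearMap.add_comp, LinearMap.comp_add, ha i, hb i]
  zero_mem' := by intro i; simp
  smul_mem' := by
    intro c a ha i
    simp only [Prod.smul_snd, Prod.smul_fst, LinearMap.smul_comp, LinearMap.comp_smul, ha i]

/-- The representation `X_U` attached to a subspace `U ⊆ k^r`:
`(X_U)₁ = k`, `(X_U)₂ = k^r/U`, and `X_U(γᵢ)(c) = c · (eᵢ + U)`. -/
def XU (U : Submodule k (Fin r → k)) : KRep k r where
  V1 := k
  V2 := (Fin r → k) ⧸ U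
  f := fun i => LinearMap.toSpanSingleton k _ (Submodule.Quotient.mk (Pi.single i 1))

/-- The `M₁`-part of the socle: `{m ∈ M₁ : x^M_u(m) = 0 for all u ∈ U}`. -/
def KRep.socKer (M : KRep k r) (U : Submodule k (Fin r → k)) : Submodule k M.V1 :=
  ⨅ u ∈ U, LinearMap.ker (M.x u)

/-- `Soc_U(M) = {m ∈ M₁ : x^M_u(m) = 0 ∀ u ∈ U} ⊕ M₂`, as a subspace of `M₁ ⊕ M₂`. -/
def KRep.soc (M : KRep k r) (U : Submodule k (Fin r → k)) : Submodule k (M.V1 × M.V2) :=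
  (M.socKer U).prod ⊤

/-- `Rad_U(M) = ∑_{u ∈ U} x^M_u(M₁) ⊆ M₂`. -/
def KRep.rad (M : KRep k r) (U : Submodule k (Fin r → k)) : Submodule k M.V2 :=
  ⨆ u ∈ U, LinearMap.range (M.x u)

/-- Direct sum of two representations. -/
def KRep.sum (M N : KRep k r) : KRep k r where
  V1 := M.V1 × N.V1
  V2 := M.V2 × N.V2
  f := fun i => (M.f i).prodMap (N.f i)

/-- Isomorphism of representations. -/
def KIso (M N : KRep k r) : Prop :=
  ∃ (e1 : M.V1 ≃ₗ[k] N.V1) (e2 : M.V2 ≃ₗ[k] N.V2),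
    ∀ i, (e2 : M.V2 →ₗ[k] N.V2) ∘ₗ M.f i = N.f i ∘ₗ (e1 : M.V1 →ₗ[k] N.V1)

/-- A representation is nonzero if its dimension vector is not `(0,0)`. -/
def KRep.Nonzero (M : KRep k r) : Prop :=
  finrank k M.V1 ≠ 0 ∨ finrank k M.V2 ≠ 0

/-- A representation is indecomposable if it is nonzero and not isomorphic to a direct
sum of two nonzero representations. -/
def KRep.Indecomposable (M : KRep k r) : Prop :=
  M.Nonzero ∧ ∀ A B : KRep k r, A.Nonzero → B.Nonzero → ¬ KIso M (A.sum B)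

/-- A representation is simple if its dimension vector is `(1,0)` or `(0,1)`. -/
def KRep.IsSimple (M : KRep k r) : Prop :=
  (finrank k M.V1 = 1 ∧ finrank k M.V2 = 0) ∨ (finrank k M.V1 = 0 ∧ finrank k M.V2 = 1)

/-- `M` has constant `d`-socle rank: `dim_k Soc_U(M)` is independent of `U ∈ Gr_{d,r}`. -/
def KRep.ConstSocRank (d : ℕ) (M : KRep k r) : Prop :=
  ∃ c : ℕ, ∀ U : Submodule k (Fin r → k), finrank k U = d → finrank k (M.soc U) = c

/-- `M` has the equal `d`-socle property: `Soc_U(M)` is independent of `U ∈ Gr_{d,r}`. -/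
def KRep.ESP (d : ℕ) (M : KRep k r) : Prop :=
  ∀ U V : Submodule k (Fin r → k), finrank k U = d → finrank k V = d → M.soc U = M.soc V

/-- `M` has constant `d`-radical rank: `dim_k Rad_U(M)` is independent of `U ∈ Gr_{d,r}`. -/
def KRep.ConstRadRank (d : ℕ) (M : KRep k r) : Prop :=
  ∃ c : ℕ, ∀ U : Submodule k (Fin r → k), finrank k U = d → finrank k (M.rad U) = c

/-- `M` has the equal `d`-radical property: `Rad_U(M)` is independent of `U ∈ Gr_{d,r}`. -/
def KRep.ERP (d : ℕ) (M : KRep k r) : Prop :=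
  ∀ U V : Submodule k (Fin r → k), finrank k U = d → finrank k V = d → M.rad U = M.rad V

/-- Inflation of a representation of `Γ_r` to a representation of `Γ_s` (for `r ≤ s`):
the same vector spaces, the first `r` arrows act as before, the remaining arrows act
as zero. -/
def KRep.inflate (s : ℕ) (M : KRep k r) : KRep k s where
  V1 := M.V1
  V2 := M.V2
  f := fun i => if h : (i : ℕ) < r then M.f ⟨i, h⟩ else 0

/-!
Up to isomorphism, the representations `X_U` with `U ∈ Gr_{d,r}` are the representations with
spaces `k` and `W`, where `dim W = r - d`, in which `γᵢ` sends `1` to `wᵢ` for some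
family `w` spanning `W`. So let `v₁, …, v_s` be the spanning family of `W = k^s/V` belonging to
`X_V`, and let `(f₁, f₂)` be a morphism from the inflation of `M` to `X_V`. The last `s - r` arrows
act by zero on the inflation, so `vᵢ = 0` for all `i > r` unless `f₁ = 0`. If `f₁ ≠ 0`, then
`v₁, …, v_r` still span `W`. If `f₁ = 0`, then `f₂` kills the images of all arrows, and any spanning
family of `r` vectors of `W` may replace `v₁, …, v_r`. Either way `(f₁, f₂)` is a morphism from `M`
to some `X_U`, hence zero.
-/

section SpanningFamilies

theorem span_range_comp_eq_of_eq_zero {R W ι κ : Type*} [Semiring R] [AddCommMonoid W] [Module R W]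
    {v : ι → W} {e : κ → ι} (hv : ∀ i ∉ Set.range e, v i = 0) :
    Submodule.span R (Set.range (v ∘ e)) = Submodule.span R (Set.range v) := by
  refine le_antisymm (Submodule.span_mono (Set.range_comp_subset_range e v)) ?_
  rw [Submodule.span_le]
  rintro _ ⟨i, rfl⟩
  by_cases hi : i ∈ Set.range e
  · obtain ⟨j, rfl⟩ := hi
    exact Submodule.subset_span ⟨j, rfl⟩
  · rw [hv i hi]
    exact Submodule.zero_mem _

theorem exists_span_range_eq_top_of_finrank_le {R W ι : Type*} [Semiring R] [StrongRankCondition R]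
    [AddCommMonoid W] [Module R W] [Module.Free R W] [Module.Finite R W] [Fintype ι]
    (h : finrank R W ≤ Fintype.card ι) :
    ∃ w : ι → W, Submodule.span R (Set.range w) = ⊤ := by
  obtain ⟨e⟩ : Nonempty (Fin (finrank R W) ↪ ι) :=
    Function.Embedding.nonempty_of_card_le (by rwa [Fintype.card_fin])
  let w : ι → W := Function.extend e (finBasis R W) 0
  have hw : w ∘ e = finBasis R W := Function.extend_comp e.injective _ _
  refine ⟨w, top_le_iff.mp ?_⟩
  rw [← (finBasis R W).span_eq, ← hw]
  exact Submodule.span_mono (Set.range_comp_subset_range e w)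

theorem finrank_ker_linearCombination_add_finrank {K W ι : Type*} [DivisionRing K] [AddCommGroup W]
    [Module K W] [Fintype ι] {w : ι → W} (hw : Submodule.span K (Set.range w) = ⊤) :
    finrank K (ker (Fintype.linearCombination K w)) + finrank K W = Fintype.card ι := by
  have h := finrank_range_add_finrank_ker (Fintype.linearCombination K w)
  rwa [Fintype.range_linearCombination, hw, finrank_top, finrank_fintype_fun_eq_card, add_comm] at h

theorem span_range_mk_single_eq_top {R ι : Type*} [Ring R] [Finite ι] [DecidableEq ι]
    (U : Submodule R (ι → R)) :
    Submodule.span R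
      (Set.range fun i ↦ (Submodule.Quotient.mk (Pi.single i 1) : (ι → R) ⧸ U)) = ⊤ := by
  have h : (fun i ↦ (Submodule.Quotient.mk (Pi.single i 1) : (ι → R) ⧸ U)) =
      U.mkQ ∘ Pi.basisFun R ι := by
    ext i
    simp
  rw [h, Set.range_comp, Submodule.span_image, (Pi.basisFun R ι).span_eq, Submodule.map_top,
    Submodule.range_mkQ]

end SpanningFamilies

theorem kHom_eq_bot_of_injective {M N N' : KRep k r}
    {φ : (N.V1 →ₗ[k] N'.V1) × (N.V2 →ₗ[k] N'.V2)} (hφ : φ ∈ KHom N N')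
    (hφ₁ : Function.Injective φ.1) (hφ₂ : Function.Injective φ.2) (hN' : KHom M N' = ⊥) :
    KHom M N = ⊥ := by
  rw [Submodule.eq_bot_iff] at hN' ⊢
  intro p hp
  have hcomp : (φ.1 ∘ₗ p.1, φ.2 ∘ₗ p.2) ∈ KHom M N' := fun i ↦ by
    rw [comp_assoc, hp i, ← comp_assoc, hφ i, comp_assoc]
  obtain ⟨h₁, h₂⟩ := Prod.mk_eq_zero.mp (hN' _ hcomp)
  exact Prod.ext ((cancel_left hφ₁).mp (h₁.trans (comp_zero _).symm))
    ((cancel_left hφ₂).mp (h₂.trans (comp_zero _).symm))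

theorem mem_kHom_inflate_iff {s : ℕ} (hrs : r ≤ s) {M : KRep k r} {N : KRep k s}
    {p : (M.V1 →ₗ[k] N.V1) × (M.V2 →ₗ[k] N.V2)} :
    p ∈ KHom (M.inflate s) N ↔
      (∀ j : Fin r, p.2 ∘ₗ M.f j = N.f (j.castLE hrs) ∘ₗ p.1) ∧
        ∀ i : Fin s, r ≤ i → N.f i ∘ₗ p.1 = 0 := by
  have hlt (j : Fin r) : p.2 ∘ₗ (M.inflate s).f (j.castLE hrs) = p.2 ∘ₗ M.f j :=
    congrArg (p.2 ∘ₗ ·) (dif_pos j.isLt)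
  have hge (i : Fin s) (hi : r ≤ i) : p.2 ∘ₗ (M.inflate s).f i = 0 :=
    (congrArg (p.2 ∘ₗ ·) (dif_neg hi.not_gt)).trans (comp_zero _)
  constructor
  · intro hp
    exact ⟨fun j ↦ (hlt j).symm.trans (hp (j.castLE hrs)),
      fun i hi ↦ (hp i).symm.trans (hge i hi)⟩
  · rintro ⟨hp, hp₀⟩ i
    rcases lt_or_ge (i : ℕ) r with hi | hi
    · exact (hlt ⟨i, hi⟩).trans (hp ⟨i, hi⟩)
    · exact (hge i hi).trans (hp₀ i hi).symm

namespace KRep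

variable {W : Type u} [AddCommGroup W] [Module k W] [FiniteDimensional k W]

/-- The representation with spaces `k` and `W` in which `γᵢ` acts by `c ↦ c • w i`. For `w`
spanning `W` these are the `X_U` up to isomorphism, without a choice of presentation of `W` as a
quotient of `k^r`. -/
abbrev ofFamily (w : Fin r → W) : KRep k r where
  V1 := k
  V2 := W
  f i := toSpanSingleton k W (w i)

theorem XU_eq_ofFamily (U : Submodule k (Fin r → k)) :
    XU U = ofFamily fun i ↦ (Submodule.Quotient.mk (Pi.single i 1) : (Fin r → k) ⧸ U) :=
  rfl

theorem kIso_ofFamily_XU_ker {w : Fin r → W} (hw : Submodule.span k (Set.range w) = ⊤) :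
    KIso (ofFamily w) (XU (ker (Fintype.linearCombination k w))) := by
  have hsurj : Function.Surjective (Fintype.linearCombination k w) := by
    rw [← range_eq_top, Fintype.range_linearCombination, hw]
  let e := (Fintype.linearCombination k w).quotKerEquivOfSurjective hsurj
  have he (i : Fin r) : e (Submodule.Quotient.mk (Pi.single i 1)) = w i := by
    simp [e, Fintype.linearCombination_apply_single]
  refine ⟨LinearEquiv.refl k k, e.symm, fun i ↦ LinearMap.ext_ring ?_⟩
  change e.symm ((1 : k) • w i) = (1 : k) • Submodule.Quotient.mk (Pi.single i 1)
  rw [one_smul, one_smul, ← he, e.symm_apply_apply]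

theorem kHom_ofFamily_eq_bot {M : KRep k r} {d : ℕ} (hW : d + finrank k W = r)
    (hhom : ∀ U : Submodule k (Fin r → k), finrank k U = d → KHom M (XU U) = ⊥)
    {w : Fin r → W} (hw : Submodule.span k (Set.range w) = ⊤) :
    KHom M (ofFamily w) = ⊥ := by
  obtain ⟨e₁, e₂, he⟩ := kIso_ofFamily_XU_ker hw
  have hker : finrank k (ker (Fintype.linearCombination k w)) = d := by
    have h := finrank_ker_linearCombination_add_finrank hw
    rw [Fintype.card_fin] at h
    lia
  exact kHom_eq_bot_of_injective (φ := (e₁.toLinearMap, e₂.toLinearMap)) he e₁.injective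
    e₂.injective (hhom _ hker)

theorem exists_mem_kHom_ofFamily_of_mem_kHom_inflate {s : ℕ} (hrs : r ≤ s) {M : KRep k r}
    {v : Fin s → W} (hv : Submodule.span k (Set.range v) = ⊤) (hW : finrank k W ≤ r)
    {p : (M.V1 →ₗ[k] k) × (M.V2 →ₗ[k] W)} (hp : p ∈ KHom (M.inflate s) (ofFamily v)) :
    ∃ w : Fin r → W, Submodule.span k (Set.range w) = ⊤ ∧ p ∈ KHom M (ofFamily w) := by
  obtain ⟨hlt, hge⟩ := (mem_kHom_inflate_iff hrs).mp hp
  by_cases hp₁ : p.1 = 0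
  · obtain ⟨w, hw⟩ := exists_span_range_eq_top_of_finrank_le (hW.trans_eq (Fintype.card_fin r).symm)
    refine ⟨w, hw, fun j ↦ ?_⟩
    rw [hlt j, hp₁, comp_zero, comp_zero]
  · obtain ⟨m, hm⟩ : ∃ m, p.1 m ≠ 0 := by
      simpa [LinearMap.ext_iff] using hp₁
    have hv₀ (i : Fin s) (hi : i ∉ Set.range (Fin.castLE hrs)) : v i = 0 := by
      rw [Fin.range_castLE] at hi
      have h : p.1 m • v i = 0 := LinearMap.congr_fun (hge i (not_lt.mp hi)) m
      exact (smul_eq_zero.mp h).resolve_left hm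
    exact ⟨v ∘ Fin.castLE hrs, (span_range_comp_eq_of_eq_zero hv₀).trans hv, hlt⟩

end KRep

theorem inflate_hom_to_XV_eq_bot_general {s d : ℕ} (hrs : r ≤ s) {M : KRep k r}
    (hhom : ∀ U : Submodule k (Fin r → k), finrank k U = d → KHom M (XU U) = ⊥)
    {V : Submodule k (Fin s → k)} (hV : finrank k V = d + (s - r)) :
    KHom (M.inflate s) (XU V) = ⊥ := by
  have hW : d + finrank k ((Fin s → k) ⧸ V) = r := by
    have h := Submodule.finrank_quotient_add_finrank V
    rw [hV, finrank_fin_fun] at h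
    lia
  rw [KRep.XU_eq_ofFamily, Submodule.eq_bot_iff]
  intro p hp
  obtain ⟨w, hw, hpw⟩ := KRep.exists_mem_kHom_ofFamily_of_mem_kHom_inflate hrs
    (span_range_mk_single_eq_top V) (by lia) hp
  exact (Submodule.eq_bot_iff _).mp (KRep.kHom_ofFamily_eq_bot hW hhom hw) p hpw

/-- Let `3 ≤ r < s`, `1 ≤ d < r`, and `M` an indecomposable non-simple
representation of `Γ_r`. If `Hom(M, X_U) = 0` for all `U ∈ Gr_{d,r}`, then
`Hom(inf(M), X_V) = 0` for all `V ∈ Gr_{d+s−r, s}`. -/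
theorem inflate_hom_to_XV_eq_bot (s : ℕ) (hr : 3 ≤ r) (hrs : r < s)
    (d : ℕ) (hd : 1 ≤ d) (hdr : d < r) (M : KRep k r)
    (hind : M.Indecomposable) (hns : ¬ M.IsSimple)
    (hhom : ∀ U : Submodule k (Fin r → k), finrank k U = d → KHom M (XU U) = ⊥) :
    ∀ V : Submodule k (Fin s → k), finrank k V = d + (s - r) →
      KHom (M.inflate s) (XU V) = ⊥ :=
  fun _ hV ↦ inflate_hom_to_XV_eq_bot_general hrs.le hhom hV
end

section
/- Let 3 ≤ r < s be integers, 1 ≤ d < r, and let M be an indecomposable representation of Γ_r that is not simple. If Hom(X_U, M) = 0 for all U ∈ Gr_{d,r}, then Hom(X_V, inf(M)) = 0 for all V ∈ Gr_{d+s−r, s}, where X_V denotes the corresponding representation of Γ_s. -/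
open Module LinearMap

universe u

variable {k : Type u} [Field k] {r : ℕ}

/-!
A morphism `X_U → M` is determined by the image `m` of `1 ∈ k`, and `m ∈ M₁` occurs exactly when
`x^M_u(m) = 0` for all `u ∈ U`. For `inf(M)` the operator `x_α` only sees the image of `α` under
the projection `k^s → k^r` onto the first `r` coordinates, so the condition for `V` is the one for
the image of `V`. Since the kernel of the projection has dimension `s - r`, that image contains
some `U` of dimension `d`, and imposing the condition on more vectors leaves fewer solutions `m`.
-/

section FiniteDimension

variable {R E : Type*} [Ring R] [StrongRankCondition R] [AddCommGroup E] [Module R E]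

theorem exists_submodule_le_finrank_eq {P : Submodule R E} {n : ℕ} (hn : n ≤ finrank R P) :
    ∃ Q ≤ P, finrank R Q = n := by
  have := nontrivial_of_invariantBasisNumber R
  obtain ⟨b, hb⟩ := exists_linearIndependent_of_le_finrank hn
  have hb' : LinearIndependent R (P.subtype ∘ b) := hb.map' P.subtype P.ker_subtype
  refine ⟨Submodule.span R (Set.range (P.subtype ∘ b)), ?_, ?_⟩
  · exact Submodule.span_le.2 (Set.range_subset_iff.2 fun i => (b i).2)
  · simpa using finrank_span_eq_card hb'

variable {K V W : Type*} [DivisionRing K] [AddCommGroup V] [Module K V] [FiniteDimensional K V]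
  [AddCommGroup W] [Module K W]

theorem finrank_le_finrank_map_add_finrank_ker (f : V →ₗ[K] W) (P : Submodule K V) :
    finrank K P ≤ finrank K (P.map f) + finrank K (ker f) := by
  have hker : finrank K (ker (f.domRestrict P)) ≤ finrank K (ker f) := by
    rw [← Submodule.finrank_map_subtype_eq, ker_domRestrict]
    exact Submodule.finrank_mono (Submodule.map_comap_le _ _)
  have hrank := finrank_range_add_finrank_ker (f.domRestrict P)
  rw [range_domRestrict] at hrank
  lia

theorem finrank_add_finrank_le_finrank_map_add_finrank {f : V →ₗ[K] W}
    (hf : Function.Surjective f) (P : Submodule K V) :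
    finrank K P + finrank K W ≤ finrank K (P.map f) + finrank K V := by
  have hP := finrank_le_finrank_map_add_finrank_ker f P
  have hrank := finrank_range_add_finrank_ker f
  rw [range_eq_top.2 hf, finrank_top] at hrank
  lia

end FiniteDimension

namespace KRep

/-- The operators `x^M_α` assembled into the bilinear map `(α, m) ↦ x^M_α(m)`; its flip sends `m`
to the linear map `α ↦ x^M_α(m)`. -/
def xₗ (M : KRep k r) : (Fin r → k) →ₗ[k] M.V1 →ₗ[k] M.V2 :=
  Fintype.linearCombination k M.f

@[simp]
theorem xₗ_apply (M : KRep k r) (α : Fin r → k) : M.xₗ α = M.x α :=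
  rfl

@[simp]
theorem x_single_one (M : KRep k r) (i : Fin r) : M.x (Pi.single i 1) = M.f i := by
  simp [← xₗ_apply, xₗ]

theorem mem_socKer_iff {M : KRep k r} {U : Submodule k (Fin r → k)} {m : M.V1} :
    m ∈ M.socKer U ↔ ∀ u ∈ U, M.x u m = 0 := by
  simp [socKer]

theorem mem_socKer_iff_le_ker {M : KRep k r} {U : Submodule k (Fin r → k)} {m : M.V1} :
    m ∈ M.socKer U ↔ U ≤ ker (M.xₗ.flip m) :=
  mem_socKer_iff

theorem socKer_anti (M : KRep k r) : Antitone M.socKer :=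
  fun _ _ hUV => biInf_mono hUV

end KRep

section HomFromXU

variable {M : KRep k r} {U : Submodule k (Fin r → k)}

theorem mem_KHom_XU_iff {f₁ : k →ₗ[k] M.V1} {f₂ : ((Fin r → k) ⧸ U) →ₗ[k] M.V2} :
    (f₁, f₂) ∈ KHom (XU U) M ↔ f₂ ∘ₗ U.mkQ = M.xₗ.flip (f₁ 1) := by
  have hgen (i : Fin r) : f₂ ∘ₗ (XU U).f i = M.f i ∘ₗ f₁ ↔
      f₂ (U.mkQ (Pi.single i 1)) = M.xₗ.flip (f₁ 1) (Pi.single i 1) := by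
    rw [flip_apply, KRep.xₗ_apply, KRep.x_single_one]
    refine LinearMap.ext_ring_iff.trans (Eq.congr_left (congrArg f₂ ?_))
    exact one_smul k _
  exact (forall_congr' hgen).trans
    ⟨fun h => pi_ext' fun i => ext_ring (h i), fun h i => LinearMap.congr_fun h _⟩

theorem map_one_mem_socKer {p : (k →ₗ[k] M.V1) × (((Fin r → k) ⧸ U) →ₗ[k] M.V2)}
    (hp : p ∈ KHom (XU U) M) : p.1 1 ∈ M.socKer U := by
  rw [KRep.mem_socKer_iff_le_ker, ← mem_KHom_XU_iff.1 hp]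
  intro u hu
  simp [(Submodule.Quotient.mk_eq_zero U).2 hu]

/-- `Hom(X_U, M) ≅ {m ∈ M₁ : x^M_u(m) = 0 for all u ∈ U}`, sending a morphism `(f₁, f₂)` to
`f₁(1)`. -/
def KHomXUEquivSocKer (M : KRep k r) (U : Submodule k (Fin r → k)) :
    KHom (XU U) M ≃ₗ[k] M.socKer U where
  toFun p := ⟨p.1.1 (1 : k), map_one_mem_socKer p.2⟩
  map_add' _ _ := rfl
  map_smul' _ _ := rfl
  invFun m :=
    ⟨(toSpanSingleton k M.V1 m, U.liftQ (M.xₗ.flip m) (KRep.mem_socKer_iff_le_ker.1 m.2)),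
      mem_KHom_XU_iff.2 (by simp)⟩
  left_inv := by
    rintro ⟨⟨f₁, f₂⟩, hf⟩
    refine Subtype.ext (Prod.ext (ext_ring (one_smul k _)) (U.linearMap_qext ?_))
    exact (U.liftQ_mkQ _ _).trans (mem_KHom_XU_iff.1 hf).symm
  right_inv m := Subtype.ext (one_smul k m.1)

theorem KHom_XU_eq_bot_iff : KHom (XU U) M = ⊥ ↔ M.socKer U = ⊥ := by
  rw [← Submodule.subsingleton_iff_eq_bot, ← Submodule.subsingleton_iff_eq_bot]
  exact (KHomXUEquivSocKer M U).toEquiv.subsingleton_congr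

end HomFromXU

namespace KRep

variable {s : ℕ}

theorem inflate_f_castLE (hrs : r ≤ s) (M : KRep k r) (i : Fin r) :
    (M.inflate s).f (Fin.castLE hrs i) = M.f i :=
  dif_pos i.2

theorem inflate_f_eq_zero (M : KRep k r) {i : Fin s} (hi : r ≤ i) : (M.inflate s).f i = 0 :=
  dif_neg hi.not_gt

theorem inflate_x (hrs : r ≤ s) (M : KRep k r) (α : Fin s → k) :
    (M.inflate s).x α = M.x (funLeft k k (Fin.castLE hrs) α) := by
  refine (Fintype.sum_of_injective _ (Fin.castLE_injective hrs) _ _ (fun i hi => ?_)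
    fun i => ?_).symm
  · have hri : r ≤ i := not_lt.1 fun h => hi ⟨⟨i, h⟩, rfl⟩
    rw [inflate_f_eq_zero M hri, smul_zero]
  · rw [inflate_f_castLE, funLeft_apply]
    rfl

theorem socKer_inflate (hrs : r ≤ s) (M : KRep k r) (V : Submodule k (Fin s → k)) :
    (M.inflate s).socKer V = M.socKer (V.map (funLeft k k (Fin.castLE hrs))) := by
  have hker (v : Fin s → k) :
      ker ((M.inflate s).x v) = ker (M.x (funLeft k k (Fin.castLE hrs) v)) :=
    congrArg ker (M.inflate_x hrs v)
  have hmap : M.socKer (V.map (funLeft k k (Fin.castLE hrs))) =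
      ⨅ v ∈ V, ker (M.x (funLeft k k (Fin.castLE hrs) v)) := by
    ext m
    simp [mem_socKer_iff]
  exact (iInf_congr fun v => iInf_congr fun _ => hker v).trans hmap.symm

end KRep

theorem inflate_hom_from_XV_eq_bot_general {s d : ℕ} (hrs : r ≤ s) (M : KRep k r)
    (hhom : ∀ U : Submodule k (Fin r → k), finrank k U = d → KHom (XU U) M = ⊥)
    (V : Submodule k (Fin s → k)) (hV : finrank k V = d + (s - r)) :
    KHom (XU V) (M.inflate s) = ⊥ := by
  have hdim : d ≤ finrank k (V.map (funLeft k k (Fin.castLE hrs))) := by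
    have h := finrank_add_finrank_le_finrank_map_add_finrank
      (funLeft_surjective_of_injective k k _ (Fin.castLE_injective hrs)) V
    simp only [finrank_fin_fun] at h
    lia
  obtain ⟨U, hUV, hU⟩ := exists_submodule_le_finrank_eq hdim
  have hsoc : M.socKer U = ⊥ := KHom_XU_eq_bot_iff.1 (hhom U hU)
  rw [KHom_XU_eq_bot_iff, KRep.socKer_inflate hrs]
  exact eq_bot_mono (M.socKer_anti hUV) hsoc

/-- Let `3 ≤ r < s`, `1 ≤ d < r`, and `M` an indecomposable non-simple
representation of `Γ_r`. If `Hom(X_U, M) = 0` for all `U ∈ Gr_{d,r}`, then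
`Hom(X_V, inf(M)) = 0` for all `V ∈ Gr_{d+s−r, s}`. -/
theorem inflate_hom_from_XV_eq_bot (s : ℕ) (hr : 3 ≤ r) (hrs : r < s)
    (d : ℕ) (hd : 1 ≤ d) (hdr : d < r) (M : KRep k r)
    (hind : M.Indecomposable) (hns : ¬ M.IsSimple)
    (hhom : ∀ U : Submodule k (Fin r → k), finrank k U = d → KHom (XU U) M = ⊥) :
    ∀ V : Submodule k (Fin s → k), finrank k V = d + (s - r) →
      KHom (XU V) (M.inflate s) = ⊥ := by
  exact inflate_hom_from_XV_eq_bot_general hrs.le M hhom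
end

section
/- Let r = 3 and let E be the representation of Γ₃ with E₁ = E₂ = k², E(γ₁) = id, E(γ₂)(a,b) = (b,0) and E(γ₃)(a,b) = (0,a). Then for every 2-dimensional subspace U ∈ Gr_{2,3} of k³ one has Hom(X_U, E) = 0 and Hom(E, X_U) = 0. Moreover, every indecomposable proper nonzero subrepresentation of E has dimension vector (0,1) or (1,2). -/
open Module LinearMap

universe u

variable {k : Type u} [Field k] {r : ℕ}

/-- The subrepresentation of `M` given by compatible subspaces `W₁ ⊆ M₁`, `W₂ ⊆ M₂`,
viewed as a representation. -/
def KRep.subRep (M : KRep k r) (W1 : Submodule k M.V1) (W2 : Submodule k M.V2)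
    (h : ∀ i, W1 ≤ W2.comap (M.f i)) : KRep k r where
  V1 := W1
  V2 := W2
  f := fun i => (M.f i).restrict (fun _ hx => h i hx)

/-- The quotient representation `M/W` for compatible subspaces `W₁ ⊆ M₁`, `W₂ ⊆ M₂`. -/
def KRep.quotRep (M : KRep k r) (W1 : Submodule k M.V1) (W2 : Submodule k M.V2)
    (h : ∀ i, W1 ≤ W2.comap (M.f i)) : KRep k r where
  V1 := M.V1 ⧸ W1
  V2 := M.V2 ⧸ W2
  f := fun i => Submodule.mapQ W1 W2 (M.f i) (h i)

/-- Ringel's elementary representation `E` of `Γ₃`: `E₁ = E₂ = k²`,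
`E(γ₁) = id`, `E(γ₂)(a,b) = (b,0)`, `E(γ₃)(a,b) = (0,a)`. -/
noncomputable def ERingel (k : Type u) [Field k] : KRep k 3 where
  V1 := Fin 2 → k
  V2 := Fin 2 → k
  f := ![LinearMap.id, Matrix.toLin' !![0, 1; 0, 0], Matrix.toLin' !![0, 0; 1, 0]]

/-!
If `v ≠ 0` in `E₁`, the vectors `x^E_α(v) = (α₁ v₁ + α₂ v₂, α₁ v₂ + α₃ v₁)` fill `E₂ = k²`; the
theorem rests on this property (transitivity of the operators `x^E_α`) and on `dim E₁ = 2`.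

A morphism `X_U → E` is determined by a vector `m ∈ E₁` with `x^E_α(m) = 0` for all `α ∈ U`, and
for `m ≠ 0` transitivity leaves only a line of such `α`. A morphism `(f₁, f₂) : E → X_U` satisfies
`f₂(x^E_α(v)) = f₁(v) (α + U)`; taking `v ≠ 0` in the kernel of `f₁ : k² → k` gives `f₂ = 0`, and
then `f₁ = 0` since `U ≠ k³`. A subrepresentation that is nonzero at the source vertex is
everything at the sink, and one that vanishes there is a sum of copies of `(0, k)`.
-/

namespace KRep

theorem x_apply (M : KRep k r) (α : Fin r → k) (v : M.V1) :
    M.x α v = ∑ i, α i • M.f i v := by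
  simp only [x, LinearMap.sum_apply, LinearMap.smul_apply]

/-- The linear map `k^r → M₂`, `α ↦ x^M_α(v)`, attached to a vector `v ∈ M₁`. -/
def orbitMap (M : KRep k r) (v : M.V1) : (Fin r → k) →ₗ[k] M.V2 :=
  Fintype.linearCombination k fun i => M.f i v

theorem orbitMap_apply (M : KRep k r) (v : M.V1) (α : Fin r → k) : M.orbitMap v α = M.x α v := by
  rw [x_apply, orbitMap, Fintype.linearCombination_apply]

/-- `M` is transitive if the operators `x^M_α` move every nonzero vector of `M₁` onto all of `M₂`,
i.e. `{x^M_α}` is a transitive space of operators in the sense of linear algebra. -/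
def IsTransitive (M : KRep k r) : Prop :=
  ∀ v : M.V1, v ≠ 0 → Function.Surjective (M.orbitMap v)

/-- The representation `(0, V)`, concentrated at the sink of `Γ_r`. -/
def atSink (k : Type u) [Field k] (r : ℕ) (V : Type u) [AddCommGroup V] [Module k V]
    [FiniteDimensional k V] : KRep k r where
  V1 := PUnit.{u + 1}
  V2 := V
  f := fun _ => 0

theorem atSink_nonzero (V : Type u) [AddCommGroup V] [Module k V] [FiniteDimensional k V]
    [Nontrivial V] : (atSink k r V).Nonzero :=
  Or.inr (finrank_pos (R := k) (M := V)).ne'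

theorem kIso_atSink_sum {M : KRep k r} [Subsingleton M.V1] {V W : Type u}
    [AddCommGroup V] [Module k V] [FiniteDimensional k V]
    [AddCommGroup W] [Module k W] [FiniteDimensional k W] (e : M.V2 ≃ₗ[k] V × W) :
    KIso M ((atSink k r V).sum (atSink k r W)) :=
  ⟨LinearEquiv.ofSubsingleton M.V1 (PUnit.{u + 1} × PUnit.{u + 1}), e,
    fun _ => Subsingleton.elim _ _⟩

theorem Indecomposable.finrank_V2_eq_one {M : KRep k r} (hM : M.Indecomposable)
    (h1 : finrank k M.V1 = 0) : finrank k M.V2 = 1 := by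
  have hpos : finrank k M.V2 ≠ 0 := hM.1.resolve_left (not_not_intro h1)
  by_contra hne
  obtain ⟨n, hn⟩ : ∃ n, finrank k M.V2 = 1 + (n + 1) := ⟨finrank k M.V2 - 2, by omega⟩
  have : Subsingleton M.V1 := finrank_zero_iff.1 h1
  have e : M.V2 ≃ₗ[k] k × (Fin (n + 1) → k) := LinearEquiv.ofFinrankEq _ _ (by simp [hn])
  exact hM.2 _ _ (atSink_nonzero _) (atSink_nonzero _) (kIso_atSink_sum e)

end KRep

theorem KHom.snd_x_apply {M N : KRep k r} {p : (M.V1 →ₗ[k] N.V1) × (M.V2 →ₗ[k] N.V2)}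
    (hp : p ∈ KHom M N) (α : Fin r → k) (v : M.V1) : p.2 (M.x α v) = N.x α (p.1 v) := by
  simp only [KRep.x_apply, map_sum, map_smul]
  exact Finset.sum_congr rfl fun i _ => congrArg (α i • ·) (LinearMap.congr_fun (hp i) v)

theorem XU_x (U : Submodule k (Fin r → k)) (α : Fin r → k) :
    (XU U).x α = LinearMap.toSpanSingleton k ((Fin r → k) ⧸ U) (U.mkQ α) := by
  change ∑ i, α i • LinearMap.toSpanSingleton k _ (U.mkQ (Pi.single i 1)) = _
  refine LinearMap.ext_ring ?_
  conv_rhs => rw [pi_eq_sum_univ' α]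
  simp only [LinearMap.sum_apply, LinearMap.smul_apply, LinearMap.toSpanSingleton_apply, one_smul,
    map_sum, map_smul]

theorem kHom_XU_left_eq_bot_of_socKer_eq_bot {M : KRep k r} {U : Submodule k (Fin r → k)}
    (hU : M.socKer U = ⊥) : KHom (XU U) M = ⊥ := by
  rw [eq_bot_iff]
  rintro ⟨(f₁ : k →ₗ[k] M.V1), (f₂ : ((Fin r → k) ⧸ U) →ₗ[k] M.V2)⟩ hf
  have hf₂ (α : Fin r → k) : f₂ (U.mkQ α) = M.x α (f₁ 1) := by
    have hx : (XU U).x α (1 : k) = U.mkQ α := by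
      rw [XU_x]
      exact one_smul k _
    exact (congrArg f₂ hx).symm.trans (KHom.snd_x_apply hf α (1 : k))
  have hsoc : f₁ 1 ∈ M.socKer U := by
    simp only [KRep.socKer, Submodule.mem_iInf, LinearMap.mem_ker]
    intro α hα
    rw [← hf₂, Submodule.mkQ_apply, (Submodule.Quotient.mk_eq_zero U).2 hα, map_zero]
  have hf₁ : f₁ 1 = 0 := by rwa [hU, Submodule.mem_bot] at hsoc
  have hf₂_zero : f₂ = 0 := Submodule.linearMap_qext U <| LinearMap.ext fun α => by
    rw [LinearMap.comp_apply, hf₂, hf₁, map_zero, LinearMap.zero_comp, LinearMap.zero_apply]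
  exact Prod.ext (LinearMap.ext_ring hf₁) hf₂_zero

namespace KRep.IsTransitive

variable {M : KRep k r}

theorem finrank_add_finrank_le (hM : M.IsTransitive) {v : M.V1} (hv : v ≠ 0)
    {U : Submodule k (Fin r → k)} (hU : ∀ α ∈ U, M.x α v = 0) :
    finrank k U + finrank k M.V2 ≤ r := by
  have hker : U ≤ LinearMap.ker (M.orbitMap v) := fun α hα => by
    rw [LinearMap.mem_ker, orbitMap_apply, hU α hα]
  have hrank := (M.orbitMap v).finrank_range_add_finrank_ker
  rw [LinearMap.range_eq_top.2 (hM v hv), finrank_top, finrank_fin_fun] at hrank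
  have := Submodule.finrank_mono hker
  omega

theorem socKer_eq_bot (hM : M.IsTransitive) {U : Submodule k (Fin r → k)}
    (hU : r < finrank k U + finrank k M.V2) : M.socKer U = ⊥ := by
  refine (Submodule.eq_bot_iff _).2 fun v hv => by_contra fun hv0 => ?_
  simp only [socKer, Submodule.mem_iInf, LinearMap.mem_ker] at hv
  exact hU.not_ge (hM.finrank_add_finrank_le hv0 hv)

theorem kHom_XU_right_eq_bot (hM : M.IsTransitive) (h1 : 1 < finrank k M.V1)
    {U : Submodule k (Fin r → k)} (hU : U ≠ ⊤) : KHom M (XU U) = ⊥ := by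
  rw [eq_bot_iff]
  rintro ⟨(f₁ : M.V1 →ₗ[k] k), (f₂ : M.V2 →ₗ[k] (Fin r → k) ⧸ U)⟩ hf
  have hf₂ (α : Fin r → k) (v : M.V1) : f₂ (M.x α v) = f₁ v • U.mkQ α :=
    (KHom.snd_x_apply hf α v).trans (LinearMap.congr_fun (XU_x U α) (f₁ v))
  obtain ⟨w, hw, hw0⟩ := Submodule.exists_mem_ne_zero_of_ne_bot
    (LinearMap.ker_ne_bot_of_finrank_lt (f := f₁) (by rwa [finrank_self]))
  have hf₂_zero : f₂ = 0 := by
    ext y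
    obtain ⟨α, rfl⟩ := hM w hw0 y
    rw [orbitMap_apply, hf₂, LinearMap.mem_ker.1 hw, zero_smul, LinearMap.zero_apply]
  obtain ⟨α, -, hα⟩ := SetLike.exists_of_lt hU.lt_top
  have hf₁_zero : f₁ = 0 := by
    ext v
    have hv : f₁ v • U.mkQ α = 0 := by rw [← hf₂, hf₂_zero, LinearMap.zero_apply]
    exact (smul_eq_zero.1 hv).resolve_right (mt (Submodule.Quotient.mk_eq_zero U).1 hα)
  exact Prod.ext hf₁_zero hf₂_zero

theorem eq_top_of_ne_bot (hM : M.IsTransitive) {W1 : Submodule k M.V1} {W2 : Submodule k M.V2}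
    (h : ∀ i, W1 ≤ W2.comap (M.f i)) (hW1 : W1 ≠ ⊥) : W2 = ⊤ := by
  obtain ⟨v, hv, hv0⟩ := Submodule.exists_mem_ne_zero_of_ne_bot hW1
  refine Submodule.eq_top_iff'.2 fun y => ?_
  obtain ⟨α, rfl⟩ := hM v hv0 y
  rw [orbitMap_apply, x_apply]
  exact W2.sum_mem fun i _ => W2.smul_mem _ (h i hv)

theorem finrank_of_indecomposable_subRep (hM : M.IsTransitive)
    {W1 : Submodule k M.V1} {W2 : Submodule k M.V2} (h : ∀ i, W1 ≤ W2.comap (M.f i))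
    (hind : (M.subRep W1 W2 h).Indecomposable) (hproper : ¬ (W1 = ⊤ ∧ W2 = ⊤)) :
    (finrank k W1 = 0 ∧ finrank k W2 = 1) ∨
      (0 < finrank k W1 ∧ finrank k W1 < finrank k M.V1 ∧ finrank k W2 = finrank k M.V2) := by
  obtain hW1 | hW1 := eq_or_ne W1 ⊥
  · have hrank : finrank k W1 = 0 := Submodule.finrank_eq_zero.2 hW1
    exact Or.inl ⟨hrank, hind.finrank_V2_eq_one hrank⟩
  · have hW2 : W2 = ⊤ := hM.eq_top_of_ne_bot h hW1
    exact Or.inr ⟨Submodule.one_le_finrank_iff.2 hW1,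
      Submodule.finrank_lt fun hW1_top => hproper ⟨hW1_top, hW2⟩, by rw [hW2, finrank_top]⟩

end KRep.IsTransitive

theorem ERingel_x_apply (α : Fin 3 → k) (v : Fin 2 → k) :
    (ERingel k).x α v =
      (![α 0 * v 0 + α 1 * v 1, α 0 * v 1 + α 2 * v 0] : Fin 2 → k) := by
  change (∑ i, α i • (![LinearMap.id, Matrix.toLin' !![0, 1; 0, 0],
    Matrix.toLin' !![0, 0; 1, 0]] : Fin 3 → (Fin 2 → k) →ₗ[k] (Fin 2 → k)) i) v = _
  ext i
  fin_cases i <;> simp [Fin.sum_univ_three, Matrix.vecHead, Matrix.vecTail]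

theorem ERingel_isTransitive : (ERingel k).IsTransitive := by
  intro (v : Fin 2 → k) hv (w : Fin 2 → k)
  suffices ∃ α : Fin 3 → k, (![α 0 * v 0 + α 1 * v 1, α 0 * v 1 + α 2 * v 0] : Fin 2 → k) = w by
    obtain ⟨α, hα⟩ := this
    exact ⟨α, (KRep.orbitMap_apply _ _ _).trans ((ERingel_x_apply α v).trans hα)⟩
  by_cases hv0 : v 0 = 0
  · have hv1 : v 1 ≠ 0 := fun hv1 => hv (funext (Fin.forall_fin_two.2 ⟨hv0, hv1⟩))
    refine ⟨![w 1 / v 1, w 0 / v 1, 0], funext (Fin.forall_fin_two.2 ⟨?_, ?_⟩)⟩ <;>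
      simp [hv0, hv1]
  · refine ⟨![w 0 / v 0, 0, (w 1 - w 0 / v 0 * v 1) / v 0],
      funext (Fin.forall_fin_two.2 ⟨?_, ?_⟩)⟩ <;>
      simp [hv0]

theorem ERingel_orthogonal_and_subreps_general {M : KRep k r} (hM : M.IsTransitive)
    (h1 : 1 < finrank k M.V1) :
    (∀ U : Submodule k (Fin r → k),
      (r < finrank k U + finrank k M.V2 → KHom (XU U) M = ⊥) ∧ (U ≠ ⊤ → KHom M (XU U) = ⊥)) ∧
    (∀ (W1 : Submodule k M.V1) (W2 : Submodule k M.V2) (h : ∀ i, W1 ≤ W2.comap (M.f i)),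
      (M.subRep W1 W2 h).Indecomposable → ¬ (W1 = ⊤ ∧ W2 = ⊤) →
      (finrank k W1 = 0 ∧ finrank k W2 = 1) ∨
        (0 < finrank k W1 ∧ finrank k W1 < finrank k M.V1 ∧ finrank k W2 = finrank k M.V2)) :=
  ⟨fun _ => ⟨fun hU => kHom_XU_left_eq_bot_of_socKer_eq_bot (hM.socKer_eq_bot hU),
    hM.kHom_XU_right_eq_bot h1⟩, fun _ _ => hM.finrank_of_indecomposable_subRep⟩

/-- For every `2`-dimensional subspace `U ∈ Gr_{2,3}` of `k³`,
`Hom(X_U, E) = 0` and `Hom(E, X_U) = 0`; moreover every indecomposable proper nonzero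
subrepresentation of `E` has dimension vector `(0,1)` or `(1,2)`. -/
theorem ERingel_orthogonal_and_subreps :
    (∀ U : Submodule k (Fin 3 → k), finrank k U = 2 →
      KHom (XU U) (ERingel k) = ⊥ ∧ KHom (ERingel k) (XU U) = ⊥) ∧
    (∀ (W1 : Submodule k (ERingel k).V1) (W2 : Submodule k (ERingel k).V2)
      (h : ∀ i, W1 ≤ W2.comap ((ERingel k).f i)),
      ((ERingel k).subRep W1 W2 h).Indecomposable → ¬ (W1 = ⊤ ∧ W2 = ⊤) →
      (finrank k W1 = 0 ∧ finrank k W2 = 1) ∨ (finrank k W1 = 1 ∧ finrank k W2 = 2)) := by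
  have h1 : finrank k (ERingel k).V1 = 2 := finrank_fin_fun k
  have h2 : finrank k (ERingel k).V2 = 2 := finrank_fin_fun k
  obtain ⟨hom, subreps⟩ :=
    ERingel_orthogonal_and_subreps_general (ERingel_isTransitive (k := k)) (by omega)
  refine ⟨fun U hU => ⟨(hom U).1 (by omega), (hom U).2 ?_⟩, fun W1 W2 h hind hproper => ?_⟩
  · rintro rfl
    simp at hU
  · have := subreps W1 W2 h hind hproper
    omega
end
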